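/- arXiv:1712.08946 — 2 statements merged into one kernel-verified Lean document; each statement's English description precedes it below -/
import Mathlib

section
/- (Counteraction, second half: Dempster dilation forces Geometric contraction.) Let Π be a nonempty set of probability measures on a measurable space Ω whose lower probability ℓ is 2-monotone, i.e. ℓ(S∪T) + ℓ(S∩T) ≥ ℓ(S) + ℓ(T) for all measurable S, T. Let A, B be measurable with ℓ(B) > 0 and ℓ(Bᶜ) > 0. If the partition {B, Bᶜ} strictly dilates A under Dempster's rule, i.e. for both Z ∈ {B, Bᶜ}: ℓ_D(A|Z) < ℓ(A) and u_D(A|Z) > u(A), then {B, Bᶜ} strictly contracts A under the Geometric rule: for both Z ∈ {B, Bᶜ}: ℓ_G(A|Z) > ℓ(A) and u_G(A|Z) < u(A). -/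
open MeasureTheory

variable {Ω : Type*} [MeasurableSpace Ω]

/-- Lower probability of a set of measures: `ℓ(A) = inf_{P ∈ 𝔓} P(A)`. -/
noncomputable def lowP (𝔓 : Set (Measure Ω)) (A : Set Ω) : ℝ :=
  ⨅ P : 𝔓, (P.1 A).toReal

/-- Upper probability of a set of measures: `u(A) = sup_{P ∈ 𝔓} P(A)`. -/
noncomputable def upP (𝔓 : Set (Measure Ω)) (A : Set Ω) : ℝ :=
  ⨆ P : 𝔓, (P.1 A).toReal

/-- Generalized Bayes conditional lower probability: `ℓ_GB(A|B) = inf_P P(A∩B)/P(B)`. -/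
noncomputable def lowGB (𝔓 : Set (Measure Ω)) (A B : Set Ω) : ℝ :=
  ⨅ P : 𝔓, (P.1 (A ∩ B)).toReal / (P.1 B).toReal

/-- Generalized Bayes conditional upper probability: `u_GB(A|B) = sup_P P(A∩B)/P(B)`. -/
noncomputable def upGB (𝔓 : Set (Measure Ω)) (A B : Set Ω) : ℝ :=
  ⨆ P : 𝔓, (P.1 (A ∩ B)).toReal / (P.1 B).toReal

/-- Dempster conditional upper probability: `u_D(A|B) = u(A∩B)/u(B)`. -/
noncomputable def upD (𝔓 : Set (Measure Ω)) (A B : Set Ω) : ℝ :=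
  upP 𝔓 (A ∩ B) / upP 𝔓 B

/-- Dempster conditional lower probability: `ℓ_D(A|B) = 1 - u_D(Aᶜ|B)`. -/
noncomputable def lowD (𝔓 : Set (Measure Ω)) (A B : Set Ω) : ℝ :=
  1 - upD 𝔓 Aᶜ B

/-- Geometric conditional lower probability: `ℓ_G(A|B) = ℓ(A∩B)/ℓ(B)`. -/
noncomputable def lowG (𝔓 : Set (Measure Ω)) (A B : Set Ω) : ℝ :=
  lowP 𝔓 (A ∩ B) / lowP 𝔓 B

/-- Geometric conditional upper probability: `u_G(A|B) = 1 - ℓ_G(Aᶜ|B)`. -/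
noncomputable def upG (𝔓 : Set (Measure Ω)) (A B : Set Ω) : ℝ :=
  1 - lowG 𝔓 Aᶜ B

/-!
By conjugacy, `u(Sᶜ) = 1 - ℓ(S)`. Dempster dilation of `A` at `Zᶜ` says
`u(Aᶜ) u(Zᶜ) < u(Aᶜ ∩ Zᶜ)` and `u(A) u(Zᶜ) < u(A ∩ Zᶜ)`. The first reads
`(1 - ℓ(A)) (1 - ℓ(Z)) < 1 - ℓ(A ∪ Z)`, that is `ℓ(A ∪ Z) < ℓ(A) + ℓ(Z) - ℓ(A) ℓ(Z)`, and
2-monotonicity turns this upper bound on the union into the lower bound `ℓ(A) ℓ(Z) < ℓ(A ∩ Z)`.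
With `Aᶜ` in place of `A`, the second gives `ℓ(Aᶜ) ℓ(Z) < ℓ(Aᶜ ∩ Z)`. Together these are Geometric
contraction of `A` at `Z`, so dilation at each cell of `{B, Bᶜ}` controls the opposite cell.
-/

section

variable {𝔓 : Set (Measure Ω)} {A S T Z : Set Ω}

theorem upP_nonneg (𝔓 : Set (Measure Ω)) (S : Set Ω) : 0 ≤ upP 𝔓 S :=
  Real.iSup_nonneg fun _ => ENNReal.toReal_nonneg

theorem upP_compl (hne : 𝔓.Nonempty) (hprob : ∀ P ∈ 𝔓, IsProbabilityMeasure P)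
    (hS : MeasurableSet S) : upP 𝔓 Sᶜ = 1 - lowP 𝔓 S := by
  have : Nonempty 𝔓 := hne.to_subtype
  have bddBelow : BddBelow (Set.range fun P : 𝔓 => (P.1 S).toReal) :=
    ⟨0, by rintro _ ⟨P, rfl⟩; exact ENNReal.toReal_nonneg⟩
  have compl_eq (P : 𝔓) : (P.1 Sᶜ).toReal = 1 - (P.1 S).toReal :=
    have := hprob P.1 P.2
    probReal_compl_eq_one_sub hS
  -- `OrderIso.subLeft` takes values in `ℝᵒᵈ`, where an infimum is a supremum of `ℝ`.
  calc upP 𝔓 Sᶜ = ⨆ P : 𝔓, (1 - (P.1 S).toReal) := iSup_congr compl_eq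
    _ = 1 - lowP 𝔓 S := ((OrderIso.subLeft (1 : ℝ)).map_ciInf bddBelow).symm

theorem lowP_compl (hne : 𝔓.Nonempty) (hprob : ∀ P ∈ 𝔓, IsProbabilityMeasure P)
    (hS : MeasurableSet S) : lowP 𝔓 Sᶜ = 1 - upP 𝔓 S := by
  rw [eq_sub_iff_add_eq', ← eq_sub_iff_add_eq, ← upP_compl hne hprob hS.compl, compl_compl]

theorem lowD_lt_lowP_iff (hne : 𝔓.Nonempty) (hprob : ∀ P ∈ 𝔓, IsProbabilityMeasure P)
    (hA : MeasurableSet A) : lowD 𝔓 A Z < lowP 𝔓 A ↔ upP 𝔓 Aᶜ < upD 𝔓 Aᶜ Z := by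
  rw [lowD, upP_compl hne hprob hA, sub_lt_comm]

theorem upG_lt_upP_iff (hne : 𝔓.Nonempty) (hprob : ∀ P ∈ 𝔓, IsProbabilityMeasure P)
    (hA : MeasurableSet A) : upG 𝔓 A Z < upP 𝔓 A ↔ lowP 𝔓 Aᶜ < lowG 𝔓 Aᶜ Z := by
  rw [upG, lowP_compl hne hprob hA, sub_lt_comm]

theorem lowP_lt_lowG_iff (hT : 0 < lowP 𝔓 T) :
    lowP 𝔓 S < lowG 𝔓 S T ↔ lowP 𝔓 S * lowP 𝔓 T < lowP 𝔓 (S ∩ T) :=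
  lt_div_iff₀ hT

theorem upP_mul_upP_lt_upP_inter_of_upP_lt_upD (h : upP 𝔓 S < upD 𝔓 S T) :
    upP 𝔓 S * upP 𝔓 T < upP 𝔓 (S ∩ T) := by
  -- If `upP 𝔓 T = 0` then `upD 𝔓 S T = 0` by the convention `x / 0 = 0`, contradicting `h`.
  have upP_ne_zero : upP 𝔓 T ≠ 0 := fun hT =>
    (upP_nonneg 𝔓 S).not_gt (by rwa [upD, hT, div_zero] at h)
  exact (lt_div_iff₀ ((upP_nonneg 𝔓 T).lt_of_ne' upP_ne_zero)).1 h

theorem lowP_mul_lowP_lt_lowP_inter_of_upP_compl_mul_lt (hne : 𝔓.Nonempty)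
    (hprob : ∀ P ∈ 𝔓, IsProbabilityMeasure P) (hS : MeasurableSet S) (hT : MeasurableSet T)
    (hST : lowP 𝔓 S + lowP 𝔓 T ≤ lowP 𝔓 (S ∪ T) + lowP 𝔓 (S ∩ T))
    (h : upP 𝔓 Sᶜ * upP 𝔓 Tᶜ < upP 𝔓 (Sᶜ ∩ Tᶜ)) :
    lowP 𝔓 S * lowP 𝔓 T < lowP 𝔓 (S ∩ T) := by
  rw [← Set.compl_union, upP_compl hne hprob hS, upP_compl hne hprob hT,
    upP_compl hne hprob (hS.union hT)] at h
  calc lowP 𝔓 S * lowP 𝔓 T < lowP 𝔓 S + lowP 𝔓 T - lowP 𝔓 (S ∪ T) := by linarith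
    _ ≤ lowP 𝔓 (S ∩ T) := by linarith

theorem lowP_lt_lowG_of_upP_compl_lt_upD_compl (hne : 𝔓.Nonempty)
    (hprob : ∀ P ∈ 𝔓, IsProbabilityMeasure P) (hS : MeasurableSet S) (hT : MeasurableSet T)
    (hST : lowP 𝔓 S + lowP 𝔓 T ≤ lowP 𝔓 (S ∪ T) + lowP 𝔓 (S ∩ T))
    (hlT : 0 < lowP 𝔓 T) (h : upP 𝔓 Sᶜ < upD 𝔓 Sᶜ Tᶜ) : lowP 𝔓 S < lowG 𝔓 S T :=
  (lowP_lt_lowG_iff hlT).2 <|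
    lowP_mul_lowP_lt_lowP_inter_of_upP_compl_mul_lt hne hprob hS hT hST
      (upP_mul_upP_lt_upP_inter_of_upP_lt_upD h)

theorem dempster_dilation_forces_geometric_contraction_general (hne : 𝔓.Nonempty)
    (hprob : ∀ P ∈ 𝔓, IsProbabilityMeasure P) (hA : MeasurableSet A) (hZ : MeasurableSet Z)
    (hAZ : lowP 𝔓 A + lowP 𝔓 Z ≤ lowP 𝔓 (A ∪ Z) + lowP 𝔓 (A ∩ Z))
    (hAcZ : lowP 𝔓 Aᶜ + lowP 𝔓 Z ≤ lowP 𝔓 (Aᶜ ∪ Z) + lowP 𝔓 (Aᶜ ∩ Z))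
    (hlZ : 0 < lowP 𝔓 Z) (hdil : lowD 𝔓 A Zᶜ < lowP 𝔓 A ∧ upP 𝔓 A < upD 𝔓 A Zᶜ) :
    lowP 𝔓 A < lowG 𝔓 A Z ∧ upG 𝔓 A Z < upP 𝔓 A := by
  rw [lowD_lt_lowP_iff hne hprob hA] at hdil
  rw [upG_lt_upP_iff hne hprob hA]
  refine ⟨lowP_lt_lowG_of_upP_compl_lt_upD_compl hne hprob hA hZ hAZ hlZ hdil.1,
    lowP_lt_lowG_of_upP_compl_lt_upD_compl hne hprob hA.compl hZ hAcZ hlZ ?_⟩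
  simpa only [compl_compl] using hdil.2

end

/-- Theorem 5.9, second half: if `ℓ` is 2-monotone and the binary
partition `{B, Bᶜ}` strictly dilates `A` under Dempster's rule, then it strictly
contracts `A` under the Geometric rule. -/
theorem dempster_dilation_forces_geometric_contraction
    (𝔓 : Set (Measure Ω)) (hne : 𝔓.Nonempty)
    (hprob : ∀ P ∈ 𝔓, IsProbabilityMeasure P)
    (h2mono : ∀ S T : Set Ω, MeasurableSet S → MeasurableSet T →
      lowP 𝔓 S + lowP 𝔓 T ≤ lowP 𝔓 (S ∪ T) + lowP 𝔓 (S ∩ T))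
    (A B : Set Ω) (hA : MeasurableSet A) (hB : MeasurableSet B)
    (hlB : 0 < lowP 𝔓 B) (hlBc : 0 < lowP 𝔓 Bᶜ)
    (hdil : ∀ Z ∈ ({B, Bᶜ} : Set (Set Ω)),
      lowD 𝔓 A Z < lowP 𝔓 A ∧ upP 𝔓 A < upD 𝔓 A Z) :
    ∀ Z ∈ ({B, Bᶜ} : Set (Set Ω)),
      lowP 𝔓 A < lowG 𝔓 A Z ∧ upG 𝔓 A Z < upP 𝔓 A := by
  rintro Z (rfl | rfl)
  · exact dempster_dilation_forces_geometric_contraction_general hne hprob hA hB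
      (h2mono _ _ hA hB) (h2mono _ _ hA.compl hB) hlB (hdil _ (by simp))
  · exact dempster_dilation_forces_geometric_contraction_general hne hprob hA hB.compl
      (h2mono _ _ hA hB.compl) (h2mono _ _ hA.compl hB.compl) hlBc (hdil _ (by simp))
end

section
/- (Ratio bounds for suprema and infima over a set of probability measures.) Let Π be a nonempty set of probability measures on a measurable space Ω and let A, B be measurable sets with P(B) > 0 for every P ∈ Π. Then: (i) sup_{P∈Π} P(A∩B) / sup_{P∈Π} P(B) ≤ sup_{P∈Π} [P(A∩B)/P(B)]; and (ii) if moreover inf_{P∈Π} P(B) > 0, then inf_{P∈Π} P(A∩B) / inf_{P∈Π} P(B) ≥ inf_{P∈Π} [P(A∩B)/P(B)]. -/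
open MeasureTheory

variable {Ω : Type*} [MeasurableSpace Ω]

section RatioOfExtrema

variable {ι K : Type*} [Nonempty ι] [Field K] [ConditionallyCompleteLinearOrder K]
  [IsStrictOrderedRing K] {f g : ι → K}

theorem ciSup_div_ciSup_le_ciSup_div (hf : ∀ i, 0 ≤ f i) (hg : ∀ i, 0 < g i)
    (hg_bdd : BddAbove (Set.range g)) (hfg_bdd : BddAbove (Set.range fun i => f i / g i)) :
    (⨆ i, f i) / (⨆ i, g i) ≤ ⨆ i, f i / g i := by
  let i₀ : ι := Classical.arbitrary ι
  have hsup_pos : 0 < ⨆ i, g i := (hg i₀).trans_le (le_ciSup hg_bdd i₀)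
  have hratio_nonneg : 0 ≤ ⨆ i, f i / g i :=
    (div_nonneg (hf i₀) (hg i₀).le).trans (le_ciSup hfg_bdd i₀)
  rw [div_le_iff₀ hsup_pos]
  refine ciSup_le fun j => ?_
  calc f j = f j / g j * g j := (div_mul_cancel₀ _ (hg j).ne').symm
    _ ≤ (⨆ i, f i / g i) * ⨆ i, g i :=
      mul_le_mul (le_ciSup hfg_bdd j) (le_ciSup hg_bdd j) (hg j).le hratio_nonneg

theorem ciInf_div_le_ciInf_div_ciInf (hf : ∀ i, 0 ≤ f i) (hg_bdd : BddBelow (Set.range g))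
    (hg : 0 < ⨅ i, g i) :
    ⨅ i, f i / g i ≤ (⨅ i, f i) / (⨅ i, g i) := by
  have hg_pos (i : ι) : 0 < g i := hg.trans_le (ciInf_le hg_bdd i)
  have hratio_nonneg (i : ι) : 0 ≤ f i / g i := div_nonneg (hf i) (hg_pos i).le
  have hfg_bdd : BddBelow (Set.range fun i => f i / g i) :=
    ⟨0, Set.forall_mem_range.2 hratio_nonneg⟩
  rw [le_div_iff₀ hg]
  refine le_ciInf fun j => ?_
  calc (⨅ i, f i / g i) * ⨅ i, g i
      ≤ f j / g j * g j :=
        mul_le_mul (ciInf_le hfg_bdd j) (ciInf_le hg_bdd j) hg.le (hratio_nonneg j)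
    _ = f j := div_mul_cancel₀ _ (hg_pos j).ne'

end RatioOfExtrema

section ConditionalProbabilities

variable {𝔓 : Set (Measure Ω)} {B : Set Ω}

theorem upD_le_upGB (hne : 𝔓.Nonempty) (A : Set Ω) (hBpos : ∀ P ∈ 𝔓, 0 < (P B).toReal)
    (hBbdd : BddAbove (Set.range fun P : 𝔓 => (P.1 B).toReal)) :
    upD 𝔓 A B ≤ upGB 𝔓 A B := by
  have : Nonempty 𝔓 := hne.to_subtype
  have hratio_le_one (P : 𝔓) : (P.1 (A ∩ B)).toReal / (P.1 B).toReal ≤ 1 := by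
    have hB_ne_top : P.1 B ≠ ⊤ := (ENNReal.toReal_pos_iff.1 (hBpos P.1 P.2)).2.ne
    rw [div_le_one (hBpos P.1 P.2)]
    exact ENNReal.toReal_mono hB_ne_top (measure_mono Set.inter_subset_right)
  exact ciSup_div_ciSup_le_ciSup_div (fun _ => ENNReal.toReal_nonneg)
    (fun P => hBpos P.1 P.2) hBbdd ⟨1, Set.forall_mem_range.2 hratio_le_one⟩

theorem lowGB_le_lowG (hne : 𝔓.Nonempty) (A : Set Ω) (hB : 0 < lowP 𝔓 B) :
    lowGB 𝔓 A B ≤ lowG 𝔓 A B := by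
  have : Nonempty 𝔓 := hne.to_subtype
  exact ciInf_div_le_ciInf_div_ciInf (fun _ => ENNReal.toReal_nonneg)
    ⟨0, Set.forall_mem_range.2 fun _ => ENNReal.toReal_nonneg⟩ hB

end ConditionalProbabilities

theorem ratio_bounds_sup_inf_general
    (𝔓 : Set (Measure Ω)) (hne : 𝔓.Nonempty) (A B : Set Ω)
    (hBpos : ∀ P ∈ 𝔓, 0 < (P B).toReal)
    (hBbdd : BddAbove (Set.range fun P : 𝔓 => (P.1 B).toReal)) :
    upP 𝔓 (A ∩ B) / upP 𝔓 B ≤ upGB 𝔓 A B ∧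
      (0 < lowP 𝔓 B → lowGB 𝔓 A B ≤ lowP 𝔓 (A ∩ B) / lowP 𝔓 B) :=
  ⟨upD_le_upGB hne A hBpos hBbdd, lowGB_le_lowG hne A⟩

/-- ratio bounds: (i) `sup P(A∩B) / sup P(B) ≤ sup [P(A∩B)/P(B)]`, and
(ii) if `inf P(B) > 0`, then `inf P(A∩B) / inf P(B) ≥ inf [P(A∩B)/P(B)]`. -/
theorem ratio_bounds_sup_inf
    (𝔓 : Set (Measure Ω)) (hne : 𝔓.Nonempty)
    (hprob : ∀ P ∈ 𝔓, IsProbabilityMeasure P)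
    (A B : Set Ω) (hA : MeasurableSet A) (hB : MeasurableSet B)
    (hBpos : ∀ P ∈ 𝔓, 0 < (P B).toReal) :
    upP 𝔓 (A ∩ B) / upP 𝔓 B ≤ upGB 𝔓 A B ∧
      (0 < lowP 𝔓 B → lowGB 𝔓 A B ≤ lowP 𝔓 (A ∩ B) / lowP 𝔓 B) :=
  ratio_bounds_sup_inf_general 𝔓 hne A B hBpos
    ⟨1, Set.forall_mem_range.2 fun P => have := hprob P.1 P.2; measureReal_le_one⟩
end
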